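/- Let 𝐫 = ((r_1,s_1),…,(r_v,s_v)) and 𝐭 = ((t_1,u_1),…,(t_w,u_w)) be vectors of pairs of integers with all s_i, u_j ≠ 0 and all the ratios r_i/s_i and t_j/u_j not in ℤ_{≤0}. Then there exists a positive integer B such that for every integer b ≥ B, the image Δ_b^{𝐫,𝐭}([0,1]) of the interval [0,1] under Δ_b^{𝐫,𝐭} equals the image Ξ_{𝐫,𝐭}(b̲, ℝ) of ℝ under Ξ_{𝐫,𝐭}(b̲, ·), where b̲ is the unique representative of b modulo d_{𝐫,𝐭} in {1, …, d_{𝐫,𝐭}}. -/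

import Mathlib

open Polynomial
open scoped Classical

noncomputable section

/-- The generalized Dwork map `D_b(α)`: the unique rational whose reduced denominator is
coprime to `b` and such that `b·D_b(α) − α ∈ {0, 1, …, b−1}`. -/
def dwork (b : ℕ) (α : ℚ) : ℚ :=
  if h : ∃ θ : ℚ, Nat.Coprime θ.den b ∧ ∃ k : ℤ, 0 ≤ k ∧ k < (b : ℤ) ∧ (b : ℚ) * θ - α = (k : ℚ)
  then h.choose else 0

/-- `α ∈ ℤ_{≤0}`. -/
def IsNonPosInt (α : ℚ) : Prop := ∃ m : ℤ, m ≤ 0 ∧ α = (m : ℚ)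

/-- `α ∈ ℤ_{>0}`. -/
def IsPosInt (α : ℚ) : Prop := ∃ m : ℤ, 0 < m ∧ α = (m : ℚ)

/-- `𝔫_α`. -/
def frakn (α : ℚ) : ℤ := if 0 ≤ α then α.num else |α.num| + 1

/-- `⟨x⟩`: the fractional part of `x` if `x ∉ ℤ`, and `1` if `x ∈ ℤ`. -/
def cangle (x : ℝ) : ℝ := if ∃ m : ℤ, x = (m : ℝ) then 1 else Int.fract x

/-- Christol order `x ⪯ y`. -/
def cle (x y : ℝ) : Prop := cangle x < cangle y ∨ (cangle x = cangle y ∧ y ≤ x)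

/-- The step function `δ_b(r, s, ·)`. -/
def qdelta (b : ℕ) (r s : ℤ) (x : ℝ) : ℤ :=
  if Int.gcd (s / (Nat.gcd (Int.gcd r s) b : ℤ)) (((b / Nat.gcd (Int.gcd r s) b : ℕ)) : ℤ) = 1 then
    ⌊(Nat.gcd (Int.gcd r s) b : ℝ) * x
        - ((dwork (b / Nat.gcd (Int.gcd r s) b) ((r : ℚ) / (s : ℚ)) : ℚ) : ℝ)
        - ((⌊1 - (r : ℚ) / (s : ℚ)⌋ : ℤ) : ℝ) / ((b / Nat.gcd (Int.gcd r s) b : ℕ) : ℝ)⌋ + 1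
  else 0

/-- The Landau-type step function `Δ_b^{𝐫,𝐭}`. -/
def qDeltaFn {v w : ℕ} (b : ℕ) (rr : Fin v → ℤ × ℤ) (tt : Fin w → ℤ × ℤ) (x : ℝ) : ℤ :=
  (∑ i, qdelta b (rr i).1 (rr i).2 x) - (∑ j, qdelta b (tt j).1 (tt j).2 x)

/-- The q-Pochhammer symbol `(q^r; q^s)_n` for `n ∈ ℕ`, inside `ℚ(q)`. -/
def qPoch (r s : ℤ) (n : ℕ) : RatFunc ℚ :=
  ∏ i ∈ Finset.range n, (1 - RatFunc.X ^ (r + s * (i : ℤ)))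

/-- The q-Pochhammer symbol `(q^r; q^s)_n` for `n ∈ ℤ`. -/
def qPochZ (r s : ℤ) (n : ℤ) : RatFunc ℚ :=
  if 0 ≤ n then qPoch r s n.toNat else (qPoch (r - s) (-s) (-n).toNat)⁻¹

/-- Multiplicity of `p` in `g`: the largest `k` with `p^k ∣ g`. -/
def polyMult (p g : Polynomial ℚ) : ℕ := sSup {k : ℕ | p ^ k ∣ g}

/-- The valuation `v_{φ_b}` on `ℚ(q)` attached to the `b`-th cyclotomic polynomial. -/
def cycVal (b : ℕ) (f : RatFunc ℚ) : ℤ :=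
  (polyMult (cyclotomic b ℚ) f.num : ℤ) - (polyMult (cyclotomic b ℚ) f.denom : ℤ)

/-- The image of an integer polynomial in `ℚ(q)`. -/
def polyZ (g : Polynomial ℤ) : RatFunc ℚ :=
  algebraMap (Polynomial ℚ) (RatFunc ℚ) (g.map (Int.castRingHom ℚ))

/-- `f ∈ ℤ[q⁻¹, q]`. -/
def IsIntLaurent (f : RatFunc ℚ) : Prop :=
  ∃ (m : ℕ) (g : Polynomial ℤ), f * RatFunc.X ^ m = polyZ g

/-- `f ∈ ℤ[q]`. -/
def IsIntPoly (f : RatFunc ℚ) : Prop := ∃ g : Polynomial ℤ, f = polyZ g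

/-- The ratio attached to a pair of integers. -/
def ratOf (p : ℤ × ℤ) : ℚ := (p.1 : ℚ) / (p.2 : ℚ)

/-- The q-hypergeometric term `Q_{𝐫,𝐭}(q; n)`, `n ∈ ℕ`. -/
def qHyp {v w : ℕ} (rr : Fin v → ℤ × ℤ) (tt : Fin w → ℤ × ℤ) (n : ℕ) : RatFunc ℚ :=
  (∏ i, qPoch (rr i).1 (rr i).2 n) / (∏ j, qPoch (tt j).1 (tt j).2 n)

/-- The q-hypergeometric term `Q_{𝐫,𝐭}(q; n)`, `n ∈ ℤ`. -/
def qHypZ {v w : ℕ} (rr : Fin v → ℤ × ℤ) (tt : Fin w → ℤ × ℤ) (n : ℤ) : RatFunc ℚ :=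
  (∏ i, qPochZ (rr i).1 (rr i).2 n) / (∏ j, qPochZ (tt j).1 (tt j).2 n)

/-- `c := gcd(r, s, b)`. -/
def cOf (p : ℤ × ℤ) (b : ℕ) : ℕ := Nat.gcd (Int.gcd p.1 p.2) b

/-- Membership in `V_b` (resp. `W_b`): `gcd(s, b) = gcd(r, s, b)`. -/
def inV (p : ℤ × ℤ) (b : ℕ) : Prop := Nat.gcd p.2.natAbs b = cOf p b

/-- `d_{𝐫,𝐭}`: the lcm of all the `s_i` and `u_j`. -/
def dRT {v w : ℕ} (rr : Fin v → ℤ × ℤ) (tt : Fin w → ℤ × ℤ) : ℕ :=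
  Nat.lcm (Finset.univ.lcm fun i => ((rr i).2).natAbs)
    (Finset.univ.lcm fun j => ((tt j).2).natAbs)

/-- `b̃`: the greatest divisor of `b` coprime to `d`. -/
def btilde (d b : ℕ) : ℕ := Nat.findGreatest (fun k => k ∣ b ∧ Nat.Coprime k d) b

/-- The unique `a ∈ {1,…,d}` with `a·b̃ ≡ 1 (mod d)`. -/
def aOf (d b : ℕ) : ℕ :=
  if h : ∃ a, 1 ≤ a ∧ a ≤ d ∧ (a * btilde d b) % d = 1 % d then h.choose else 1

/-- The representative of `b` modulo `d` lying in `{1,…,d}`. -/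
def repMod (d b : ℕ) : ℕ := if b % d = 0 then d else b % d

/-- The jump abscissa `(⟨e·α⟩ + k)/c − ⌊1 − a·α⌋`. -/
def jumpPt (p : ℤ × ℤ) (b : ℕ) (a ei : ℤ) (k : ℕ) : ℝ :=
  (cangle (((ei : ℚ) * ratOf p : ℚ) : ℝ) + (k : ℝ)) / (cOf p b : ℝ)
    - ((⌊1 - (a : ℚ) * ratOf p⌋ : ℤ) : ℝ)

/-- Number of pairs `(i,k)` with jump abscissa `⪯ x` coming from one pair `p`. -/
def XiCount (p : ℤ × ℤ) (b : ℕ) (a ei : ℤ) (x : ℝ) : ℕ :=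
  if inV p b then ((Finset.range (cOf p b)).filter fun k => cle (jumpPt p b a ei k) x).card else 0

/-- The generalized Christol step function `Ξ_{𝐫,𝐭}(b, ·)`, relative to choices `e`, `f`. -/
def Xi {v w : ℕ} (rr : Fin v → ℤ × ℤ) (tt : Fin w → ℤ × ℤ) (b : ℕ)
    (e : Fin v → ℤ) (f : Fin w → ℤ) (x : ℝ) : ℤ :=
  (∑ i, (XiCount (rr i) b ((aOf (dRT rr tt) b : ℕ) : ℤ) (e i) x : ℤ))
    - (∑ j, (XiCount (tt j) b ((aOf (dRT rr tt) b : ℕ) : ℤ) (f j) x : ℤ))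

/-- `ei` is an admissible choice for the pair `p` and `b`: positive with `b·ei ≡ c (mod s)`. -/
def goodChoice (p : ℤ × ℤ) (b : ℕ) (ei : ℤ) : Prop :=
  inV p b → 0 < ei ∧ p.2 ∣ ((b : ℤ) * ei - (cOf p b : ℤ))

end

/-!
For a pair `(r, s)` with `α = r / s`, put `c = gcd(r, s, b)` and `b' = b / c`. If `e` inverts `b'`
modulo the denominator of `α`, then `b' ⟨eα⟩ - α` is an integer, and it lies in `{0, …, b' - 1}` as
soon as `b'` exceeds the absolute value of the numerator of `α`, because `α` is not in `ℤ_{≤0}`;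
hence `D_{b'}(α) = ⟨eα⟩`. On `[0, 1]` the function `δ_b(r, s, ·)` therefore counts the points
`F_k + ⌊1 - α⌋ / b`, all in `(0, 1]`, where `F_k = (⟨eα⟩ + k) / c`, while the corresponding part of
`Ξ` counts the points `F_k - ⌊1 - aα⌋` for the Christol order.

Both families of points are ordered in the same way. Distinct values `F < G` are `1 / d` apart,
which beats the perturbation of size `O(1 / b)` on one side and is decisive for the Christol order
on the other. If `F = G`, then the two parameters are congruent to `bF` modulo `1`, hence differ by
an integer `n`, and both comparisons reduce to the sign of `n`. Two similarly ordered finite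
families are cut along the same initial segments, so the two step functions take the same values.
-/

noncomputable section

/-- The bracket `⟨x⟩`, i.e. the representative of `x` modulo `1` in `(0, 1]`, over any ordered field
with a floor function; it is needed over `ℚ`, where `dwork` lives, as well as over `ℝ`. -/
def upperFract {K : Type*} [Field K] [LinearOrder K] [FloorRing K] (x : K) : K := x + ⌊1 - x⌋

section UpperFract

variable {K : Type*} [Field K] [LinearOrder K] [IsStrictOrderedRing K] [FloorRing K]

lemma upperFract_mem_Ioc (x : K) : upperFract x ∈ Set.Ioc 0 1 := by
  unfold upperFract
  constructor <;> linarith [Int.floor_le (1 - x), Int.lt_floor_add_one (1 - x)]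

lemma upperFract_sub_intCast {x : K} (hx : x ∈ Set.Ioc 0 1) (n : ℤ) : upperFract (x - n) = x := by
  have hfloor : ⌊1 - x⌋ = 0 :=
    Int.floor_eq_zero_iff.2 ⟨sub_nonneg.2 hx.2, sub_lt_self 1 hx.1⟩
  rw [upperFract, ← sub_add, Int.floor_add_intCast, hfloor, zero_add, sub_add_cancel]

end UpperFract

lemma upperFract_ratCast (x : ℚ) : upperFract (x : ℝ) = (upperFract x : ℚ) := by
  have hfloor : ⌊1 - (x : ℝ)⌋ = ⌊1 - x⌋ := by exact_mod_cast Rat.floor_cast (α := ℝ) (1 - x)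
  simp only [upperFract, hfloor, Rat.cast_add, Rat.cast_intCast]

lemma ratCast_mem_Ioc {x : ℚ} (hx : x ∈ Set.Ioc 0 1) : (x : ℝ) ∈ Set.Ioc (0 : ℝ) 1 :=
  ⟨by exact_mod_cast hx.1, by exact_mod_cast hx.2⟩

lemma cangle_eq_upperFract (x : ℝ) : cangle x = upperFract x := by
  rw [cangle, upperFract]
  split_ifs with h
  · obtain ⟨n, rfl⟩ := h
    have hfloor : ⌊1 - (n : ℝ)⌋ = 1 - n := by exact_mod_cast Int.floor_intCast (R := ℝ) (1 - n)
    rw [hfloor]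
    push_cast
    ring
  · have hfloor : ⌊1 - x⌋ = -⌊x⌋ := by
      have hne : (⌊x⌋ : ℝ) ≠ x := fun hx => h ⟨⌊x⌋, hx.symm⟩
      have hlt : (⌊x⌋ : ℝ) < x := (Int.floor_le x).lt_of_ne hne
      rw [Int.floor_eq_iff]
      push_cast
      constructor <;> linarith [Int.lt_floor_add_one x]
    rw [hfloor, Int.fract, Int.cast_neg, sub_eq_add_neg]

lemma cangle_pos (x : ℝ) : 0 < cangle x := by
  rw [cangle_eq_upperFract]
  exact (upperFract_mem_Ioc x).1

lemma cangle_sub_intCast {x : ℝ} (hx : x ∈ Set.Ioc (0 : ℝ) 1) (n : ℤ) : cangle (x - n) = x := by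
  rw [cangle_eq_upperFract, upperFract_sub_intCast hx]

/-- The embedding of `ℝ` into a lexicographic product that induces the Christol order. -/
def christolKey (x : ℝ) : ℝ ×ₗ ℝᵒᵈ := toLex (cangle x, OrderDual.toDual x)

lemma christolKey_le_iff {x y : ℝ} : christolKey x ≤ christolKey y ↔ cle x y :=
  Prod.Lex.toLex_le_toLex

lemma exists_forall_not_christolKey_le {κ : Type*} [Finite κ] (J : κ → ℝ) :
    ∃ y ∈ Set.range christolKey, ∀ t, ¬ christolKey (J t) ≤ y := by
  have hsmall : ∀ᶠ y in nhdsWithin (0 : ℝ) (Set.Ioi 0), ∀ t, y ∈ Set.Ioo 0 (cangle (J t)) :=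
    Filter.eventually_all.2 fun t => Ioo_mem_nhdsGT (cangle_pos (J t))
  obtain ⟨y, hy, hy01⟩ := (hsmall.and (Ioo_mem_nhdsGT one_pos)).exists
  have hangle : cangle y = y := by
    simpa only [Int.cast_zero, sub_zero] using cangle_sub_intCast ⟨hy01.1, hy01.2.le⟩ 0
  refine ⟨christolKey y, Set.mem_range_self y, fun t hle => ?_⟩
  rw [christolKey_le_iff, cle, hangle] at hle
  rcases hle with h | ⟨h, -⟩
  · exact (hy t).2.not_gt h
  · exact (hy t).2.ne' h

lemma exists_forall_le_iff_le {κ α β : Type*} [Finite κ] [Preorder α] [LinearOrder β]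
    {f : κ → α} {g : κ → β} (h : ∀ s t, f s ≤ f t ↔ g s ≤ g t) {S : Set β} (hg : ∀ t, g t ∈ S)
    (hbot : ∃ y ∈ S, ∀ t, ¬ g t ≤ y) (x : α) : ∃ y ∈ S, ∀ t, f t ≤ x ↔ g t ≤ y := by
  rcases {t | f t ≤ x}.eq_empty_or_nonempty with hempty | hne
  · obtain ⟨y, hyS, hy⟩ := hbot
    exact ⟨y, hyS, fun t => iff_of_false (Set.eq_empty_iff_forall_notMem.1 hempty t) (hy t)⟩
  · obtain ⟨m, hmx, hmax⟩ := Set.exists_max_image _ g (Set.toFinite _) hne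
    exact ⟨g m, hg m, fun t => ⟨hmax t, fun ht => ((h t m).2 ht).trans hmx⟩⟩

lemma card_filter_add_div_le {c : ℕ} {ξ x : ℝ} (hc : 0 < c) (hξ : ξ ∈ Set.Ioc (0 : ℝ) 1)
    (hx : x ∈ Set.Icc (0 : ℝ) 1) :
    (((Finset.range c).filter fun k : ℕ => (ξ + k) / c ≤ x).card : ℤ) = ⌊c * x - ξ⌋ + 1 := by
  have hc' : (0 : ℝ) < c := Nat.cast_pos.2 hc
  have hlower : -1 ≤ ⌊c * x - ξ⌋ := by
    rw [Int.le_floor]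
    push_cast
    linarith [mul_nonneg hc'.le hx.1, hξ.2]
  have hupper : ⌊c * x - ξ⌋ < c := by
    rw [Int.floor_lt]
    push_cast
    linarith [mul_le_of_le_one_right hc'.le hx.2, hξ.1]
  have hfilter : ((Finset.range c).filter fun k : ℕ => (ξ + k) / c ≤ x)
      = Finset.range (⌊c * x - ξ⌋ + 1).toNat := by
    ext k
    have hk : (ξ + k) / c ≤ x ↔ (k : ℤ) ≤ ⌊c * x - ξ⌋ := by
      rw [div_le_iff₀ hc', Int.le_floor, le_sub_iff_add_le, add_comm, mul_comm x, Int.cast_natCast]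
    rw [Finset.mem_filter, Finset.mem_range, Finset.mem_range, hk]
    omega
  rw [hfilter, Finset.card_range]
  omega

lemma one_le_natCast_mul_of_den_dvd {x : ℚ} {n : ℕ} (hx : 0 < x) (hn : n ≠ 0) (h : x.den ∣ n) :
    1 ≤ (n : ℚ) * x := by
  obtain ⟨m, rfl⟩ := h
  have hm : 1 ≤ (m : ℤ) := by exact_mod_cast Nat.pos_of_ne_zero (right_ne_zero_of_mul hn)
  have hnum : 1 ≤ x.num := Rat.num_pos.2 hx
  calc (1 : ℚ) ≤ ((m * x.num : ℤ) : ℚ) := by exact_mod_cast one_le_mul_of_one_le_of_one_le hm hnum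
    _ = ((x.den * m : ℕ) : ℚ) * x := by
      push_cast
      rw [← Rat.den_mul_eq_num x]
      ring

lemma add_div_lt_add_div_of_den_dvd {F G : ℚ} {d b : ℕ} (hd : d ≠ 0) (hF : F.den ∣ d)
    (hG : G.den ∣ d) {y z : ℤ} (hb : (d : ℤ) * (|y| + |z|) < b) (h : F < G) :
    F + y / b < G + z / b := by
  have hgap : 1 ≤ (d : ℚ) * (G - F) :=
    one_le_natCast_mul_of_den_dvd (sub_pos.2 h) hd
      ((Rat.sub_den_dvd_lcm G F).trans (Nat.lcm_dvd hG hF))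
  have hd' : (0 : ℚ) < d := by exact_mod_cast Nat.pos_of_ne_zero hd
  have hyz : (d : ℚ) * (y - z) < b := by
    have hle : (d : ℤ) * (y - z) ≤ d * (|y| + |z|) := by
      gcongr
      linarith [le_abs_self y, neg_abs_le z]
    exact_mod_cast hle.trans_lt hb
  have hb' : (0 : ℚ) < b := by
    exact_mod_cast (show (0 : ℤ) ≤ d * (|y| + |z|) by positivity).trans_lt hb
  have hlt : (d : ℚ) * (y - z) < d * (b * (G - F)) :=
    calc (d : ℚ) * (y - z) < b * 1 := by rwa [mul_one]
      _ ≤ b * (d * (G - F)) := by gcongr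
      _ = d * (b * (G - F)) := by ring
  have hdiv : ((y : ℚ) - z) / b < G - F :=
    (div_lt_iff₀' hb').2 (lt_of_mul_lt_mul_left hlt hd'.le)
  rw [sub_div] at hdiv
  linarith

lemma abs_floor_one_sub_le (α : ℚ) : |⌊1 - α⌋| ≤ |α.num| + 1 := by
  have hα : |α| ≤ |α.num| := by
    rw [Int.cast_abs, ← Rat.den_mul_eq_num α, abs_mul, Nat.abs_cast]
    exact le_mul_of_one_le_left (abs_nonneg α) (by exact_mod_cast α.pos)
  have hfloor : |(⌊1 - α⌋ : ℚ)| ≤ |α| + 1 :=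
    abs_le.2 ⟨by linarith [Int.lt_floor_add_one (1 - α), le_abs_self α],
      by linarith [Int.floor_le (1 - α), neg_abs_le α]⟩
  exact_mod_cast hfloor.trans (add_le_add_left hα 1)

lemma mul_abs_floor_add_abs_floor_lt {α β : ℚ} {d b : ℕ} (hα : 2 * d * (α.num.natAbs + 1) < b)
    (hβ : 2 * d * (β.num.natAbs + 1) < b) : (d : ℤ) * (|⌊1 - α⌋| + |⌊1 - β⌋|) < b := by
  zify at hα hβ
  calc (d : ℤ) * (|⌊1 - α⌋| + |⌊1 - β⌋|) ≤ d * ((|α.num| + 1) + (|β.num| + 1)) := by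
        gcongr <;> exact abs_floor_one_sub_le _
    _ < b := by linarith

section Dwork

variable {α : ℚ} {b : ℕ} {e : ℤ}

lemma dwork_eq_of_den_coprime {θ : ℚ} {k : ℤ} (hθ : θ.den.Coprime b) (hk0 : 0 ≤ k) (hkb : k < b)
    (hk : (b : ℚ) * θ - α = k) : dwork b α = θ := by
  have hex : ∃ θ : ℚ, θ.den.Coprime b ∧
      ∃ k : ℤ, 0 ≤ k ∧ k < (b : ℤ) ∧ (b : ℚ) * θ - α = (k : ℚ) := ⟨θ, hθ, k, hk0, hkb, hk⟩
  rw [dwork, dif_pos hex]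
  obtain ⟨hη, l, hl0, hlb, hl⟩ := hex.choose_spec
  set η := hex.choose
  have hb : (b : ℚ) ≠ 0 := by exact_mod_cast (hk0.trans_lt hkb).ne'
  have hsub : η - θ = ((l - k : ℤ) : ℚ) / (b : ℤ) := by
    rw [Int.cast_natCast, eq_div_iff hb]
    push_cast
    linear_combination hl - hk
  have hden : (η - θ).den = 1 := by
    have hdvd : (η - θ).den ∣ b := by
      rw [hsub, ← Rat.divInt_eq_div]
      exact Int.natCast_dvd_natCast.1 (Rat.den_dvd _ _)
    exact ((hη.mul_left hθ).coprime_dvd_left (Rat.sub_den_dvd η θ)).eq_one_of_dvd hdvd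
  have hdvd : (b : ℤ) ∣ l - k := by
    have hnum : ((η - θ).num : ℚ) = ((l - k : ℤ) : ℚ) / (b : ℤ) :=
      ((Rat.den_eq_one_iff _).1 hden).trans hsub
    rw [Int.cast_natCast, eq_div_iff hb, mul_comm] at hnum
    exact ⟨(η - θ).num, by exact_mod_cast hnum.symm⟩
  have hlk : l - k = 0 :=
    Int.eq_zero_of_abs_lt_dvd hdvd (abs_lt.2 ⟨by linarith, by linarith⟩)
  rw [hlk, Int.cast_zero, zero_div] at hsub
  exact sub_eq_zero.1 hsub

lemma den_upperFract_intCast_mul_dvd (α : ℚ) (e : ℤ) : (upperFract (e * α)).den ∣ α.den := by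
  rw [upperFract, Rat.add_intCast_den]
  simpa only [Rat.den_intCast, one_mul] using Rat.mul_den_dvd (e : ℚ) α

lemma exists_mul_upperFract_sub_eq_intCast (he : (α.den : ℤ) ∣ b * e - 1) :
    ∃ m : ℤ, (b : ℚ) * upperFract (e * α) - α = m := by
  obtain ⟨t, ht⟩ := he
  have ht' : (b : ℚ) * e - 1 = α.den * t := by exact_mod_cast ht
  refine ⟨t * α.num + b * ⌊1 - e * α⌋, ?_⟩
  push_cast
  rw [upperFract, ← Rat.den_mul_eq_num α]
  linear_combination α * ht'

lemma abs_lt_natCast_mul_of_den_dvd {x : ℚ} (hx : 0 < x) (h : x.den ∣ α.den)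
    (hb : α.num.natAbs < b) : |α| < b * x := by
  have hden : (0 : ℚ) < α.den := by exact_mod_cast α.pos
  have hnum : α.den * |α| = (α.num.natAbs : ℚ) := by
    rw [← Nat.abs_cast α.den, ← abs_mul, Rat.den_mul_eq_num, Nat.cast_natAbs, Int.cast_abs]
  refine lt_of_mul_lt_mul_left ?_ hden.le
  calc α.den * |α| < b * 1 := by rw [hnum, mul_one]; exact_mod_cast hb
    _ ≤ b * (α.den * x) := by gcongr; exact one_le_natCast_mul_of_den_dvd hx α.den_nz h
    _ = α.den * (b * x) := by ring

lemma exists_mul_upperFract_sub_mem_Ico (hα : ¬ IsNonPosInt α) (hb : α.num.natAbs < b)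
    (he : (α.den : ℤ) ∣ b * e - 1) :
    ∃ k : ℤ, 0 ≤ k ∧ k < b ∧ (b : ℚ) * upperFract (e * α) - α = k := by
  obtain ⟨k, hk⟩ := exists_mul_upperFract_sub_eq_intCast he
  have hden := den_upperFract_intCast_mul_dvd α e
  obtain ⟨hθ0, hθ1⟩ := upperFract_mem_Ioc (e * α)
  set θ := upperFract (e * α)
  refine ⟨k, ?_, ?_, hk⟩
  · have hk0 : (0 : ℚ) < k := by
      linarith [abs_lt_natCast_mul_of_den_dvd hθ0 hden hb, le_abs_self α]
    exact_mod_cast hk0.le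
  · rcases hθ1.lt_or_eq with hlt | hone
    · have hden' : (1 - θ).den ∣ α.den := by
        have h := Rat.sub_den_dvd 1 θ
        rw [Rat.den_one, one_mul] at h
        exact h.trans hden
      have hkb : (k : ℚ) < b := by
        linarith [abs_lt_natCast_mul_of_den_dvd (sub_pos.2 hlt) hden' hb, neg_abs_le α]
      exact_mod_cast hkb
    · by_contra! hbk
      refine hα ⟨b - k, sub_nonpos.2 hbk, ?_⟩
      rw [hone] at hk
      push_cast
      linarith

lemma dwork_eq_upperFract (hα : ¬ IsNonPosInt α) (hb : α.num.natAbs < b)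
    (he : (α.den : ℤ) ∣ b * e - 1) : dwork b α = upperFract (e * α) := by
  obtain ⟨k, hk0, hkb, hk⟩ := exists_mul_upperFract_sub_mem_Ico hα hb he
  have hcop : α.den.Coprime b := by
    obtain ⟨t, ht⟩ := he
    exact Nat.isCoprime_iff_coprime.1 ⟨-t, e, by linear_combination ht⟩
  exact dwork_eq_of_den_coprime
    (hcop.coprime_dvd_left (den_upperFract_intCast_mul_dvd α e)) hk0 hkb hk

lemma upperFract_add_floor_div_mem_Ioc (hα : ¬ IsNonPosInt α) (hb : α.num.natAbs < b)
    (he : (α.den : ℤ) ∣ b * e - 1) :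
    upperFract (e * α) + ⌊1 - α⌋ / b ∈ Set.Ioc 0 1 := by
  obtain ⟨k, hk0, hkb, hk⟩ := exists_mul_upperFract_sub_mem_Ico hα hb he
  have hb' : (0 : ℚ) < b := by exact_mod_cast hk0.trans_lt hkb
  have hk0' : (0 : ℚ) ≤ k := by exact_mod_cast hk0
  have hkb' : (k : ℚ) + 1 ≤ b := by exact_mod_cast hkb
  obtain ⟨hα0, hα1⟩ := upperFract_mem_Ioc α
  have heq : upperFract (e * α) + ⌊1 - α⌋ / b = (k + upperFract α) / b := by
    rw [← hk, upperFract.eq_def α]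
    field_simp
    ring
  rw [heq]
  exact ⟨div_pos (add_pos_of_nonneg_of_pos hk0' hα0) hb', (div_le_one hb').2 (by linarith)⟩

end Dwork

/-- The fraction `(⟨eα⟩ + k) / c`, from which the jumps of both step functions are obtained by a
translation. -/
def jumpFract (α : ℚ) (c : ℕ) (e : ℤ) (k : ℕ) : ℚ := (upperFract (e * α) + k) / c

lemma add_natCast_div_mem_Ioc {K : Type*} [Field K] [LinearOrder K] [IsStrictOrderedRing K] {ξ : K}
    (hξ : ξ ∈ Set.Ioc 0 1) {c k : ℕ} (hk : k < c) : (ξ + k) / c ∈ Set.Ioc 0 1 := by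
  have hc : (0 : K) < c := Nat.cast_pos.2 (Nat.zero_lt_of_lt hk)
  have hkc : (k : K) + 1 ≤ c := by exact_mod_cast hk
  exact ⟨div_pos (add_pos_of_pos_of_nonneg hξ.1 k.cast_nonneg) hc,
    (div_le_one hc).2 (by linarith [hξ.2])⟩

lemma den_jumpFract_dvd (α : ℚ) {c : ℕ} (hc : 0 < c) (e : ℤ) (k : ℕ) :
    (jumpFract α c e k).den ∣ α.den * c := by
  have hnum : (upperFract (e * α) + k).den ∣ α.den := by
    rw [Rat.add_natCast_den]
    exact den_upperFract_intCast_mul_dvd α e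
  have h := Rat.mul_den_dvd (upperFract (e * α) + k) (c : ℚ)⁻¹
  rw [Rat.inv_natCast_den_of_pos hc] at h
  exact h.trans (Nat.mul_dvd_mul_right hnum c)

lemma exists_mul_jumpFract_sub_eq_intCast {α : ℚ} {b c : ℕ} (hc : c ≠ 0) {e : ℤ}
    (he : (α.den : ℤ) ∣ b * e - 1) (k : ℕ) :
    ∃ m : ℤ, ((b * c : ℕ) : ℚ) * jumpFract α c e k - α = m := by
  obtain ⟨m, hm⟩ := exists_mul_upperFract_sub_eq_intCast he
  refine ⟨m + b * k, ?_⟩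
  have hc' : (c : ℚ) ≠ 0 := Nat.cast_ne_zero.2 hc
  push_cast
  rw [← hm, jumpFract]
  field_simp
  ring

lemma floor_one_sub_mul_add_intCast (x : ℚ) (a n : ℤ) :
    ⌊1 - a * (x + n)⌋ = ⌊1 - a * x⌋ - a * n := by
  rw [mul_add, ← sub_sub, ← Int.cast_mul, Int.floor_sub_intCast]

lemma add_floor_div_le_iff_cle {α β F G : ℚ} {d b : ℕ} (hd : d ≠ 0)
    (hF : F ∈ Set.Ioc 0 1) (hG : G ∈ Set.Ioc 0 1) (hFd : F.den ∣ d) (hGd : G.den ∣ d)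
    (hFα : ∃ m : ℤ, b * F - α = m) (hGβ : ∃ n : ℤ, b * G - β = n)
    (hb : (d : ℤ) * (|⌊1 - α⌋| + |⌊1 - β⌋|) < b) {a : ℤ} (ha : 0 < a) :
    F + ⌊1 - α⌋ / b ≤ G + ⌊1 - β⌋ / b ↔
      cle ((F : ℝ) - ⌊1 - a * α⌋) ((G : ℝ) - ⌊1 - a * β⌋) := by
  rw [cle, cangle_sub_intCast (ratCast_mem_Ioc hF), cangle_sub_intCast (ratCast_mem_Ioc hG),
    Rat.cast_lt, Rat.cast_inj]
  rcases lt_trichotomy F G with hlt | rfl | hgt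
  · exact iff_of_true (add_div_lt_add_div_of_den_dvd hd hFd hGd hb hlt).le (.inl hlt)
  · obtain ⟨m, hm⟩ := hFα
    obtain ⟨n, hn⟩ := hGβ
    obtain rfl : α = β + ((n - m : ℤ) : ℚ) := by
      push_cast
      linear_combination hn - hm
    have hb' : (0 : ℚ) < b := by
      exact_mod_cast (show (0 : ℤ) ≤ d * (_ + _) by positivity).trans_lt hb
    have hfloor := floor_one_sub_mul_add_intCast β 1 (n - m)
    simp only [Int.cast_one, one_mul] at hfloor
    rw [floor_one_sub_mul_add_intCast, hfloor]
    simp only [lt_self_iff_false, true_and, false_or, add_le_add_iff_left,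
      div_le_div_iff_of_pos_right hb', sub_le_sub_iff_left, Int.cast_le, sub_le_self_iff]
    exact (mul_nonneg_iff_of_pos_left ha).symm
  · rw [add_comm |⌊1 - α⌋|] at hb
    exact iff_of_false (add_div_lt_add_div_of_den_dvd hd hGd hFd hb hgt).not_ge
      fun h => h.elim hgt.not_gt fun h => hgt.ne' h.1

section Pair

variable {p : ℤ × ℤ} {b : ℕ} {e : ℤ}

lemma cOf_dvd_fst (p : ℤ × ℤ) (b : ℕ) : (cOf p b : ℤ) ∣ p.1 :=
  (Int.natCast_dvd_natCast.2 (Nat.gcd_dvd_left _ _)).trans (Int.gcd_dvd_left p.1 p.2)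

lemma cOf_dvd_snd (p : ℤ × ℤ) (b : ℕ) : (cOf p b : ℤ) ∣ p.2 :=
  (Int.natCast_dvd_natCast.2 (Nat.gcd_dvd_left _ _)).trans (Int.gcd_dvd_right p.1 p.2)

lemma cOf_dvd (p : ℤ × ℤ) (b : ℕ) : cOf p b ∣ b := Nat.gcd_dvd_right _ _

lemma cOf_pos (hs : p.2 ≠ 0) (b : ℕ) : 0 < cOf p b :=
  Nat.gcd_pos_of_pos_left _ (Int.gcd_pos_of_ne_zero_right _ hs)

lemma gcd_div_cOf_eq_one_iff (hs : p.2 ≠ 0) :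
    Int.gcd (p.2 / (cOf p b : ℤ)) ((b / cOf p b : ℕ) : ℤ) = 1 ↔ inV p b := by
  have hb : (cOf p b : ℤ) ∣ (b : ℤ) := Int.natCast_dvd_natCast.2 (cOf_dvd p b)
  have hdvd : cOf p b ∣ Int.gcd p.2 b := Int.dvd_gcd (cOf_dvd_snd p b) hb
  rw [Int.natCast_div, Int.gcd_div (cOf_dvd_snd p b) hb, Int.natAbs_natCast,
    Nat.div_eq_iff_eq_mul_left (cOf_pos hs b) hdvd, one_mul]
  rfl

lemma den_ratOf_mul_cOf_dvd (hs : p.2 ≠ 0) (b : ℕ) :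
    (ratOf p).den * cOf p b ∣ p.2.natAbs := by
  obtain ⟨r, hr⟩ := cOf_dvd_fst p b
  obtain ⟨s, hs'⟩ := cOf_dvd_snd p b
  have hc : (cOf p b : ℚ) ≠ 0 := by exact_mod_cast (cOf_pos hs b).ne'
  have hden : ((ratOf p).den : ℤ) ∣ s := by
    have hrat : ratOf p = Rat.divInt r s := by
      rw [ratOf, hr, hs', Rat.divInt_eq_div]
      push_cast
      exact mul_div_mul_left _ _ hc
    rw [hrat]
    exact Rat.den_dvd r s
  rw [← Int.natCast_dvd, hs', Nat.cast_mul, mul_comm]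
  exact mul_dvd_mul_left _ hden

lemma den_ratOf_dvd_mul_sub_one (hs : p.2 ≠ 0) (he : p.2 ∣ b * e - cOf p b) :
    ((ratOf p).den : ℤ) ∣ (b / cOf p b : ℕ) * e - 1 := by
  have hc : (cOf p b : ℤ) ≠ 0 := by exact_mod_cast (cOf_pos hs b).ne'
  have hb : (b : ℤ) = (b / cOf p b : ℕ) * cOf p b := by
    exact_mod_cast (Nat.div_mul_cancel (cOf_dvd p b)).symm
  have hdvd : ((ratOf p).den : ℤ) * cOf p b ∣ b * e - cOf p b := by
    refine dvd_trans ?_ he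
    exact_mod_cast Int.natCast_dvd.2 (den_ratOf_mul_cOf_dvd hs b)
  refine Int.dvd_of_mul_dvd_mul_right hc (hdvd.trans (dvd_of_eq ?_))
  linear_combination e * hb

lemma natAbs_num_lt_div_cOf (hs : p.2 ≠ 0) (hb : p.2.natAbs * (ratOf p).num.natAbs < b) :
    (ratOf p).num.natAbs < b / cOf p b := by
  have hc : cOf p b ≤ p.2.natAbs :=
    Nat.le_of_dvd (Int.natAbs_pos.2 hs) (Int.natCast_dvd.1 (cOf_dvd_snd p b))
  rw [Nat.lt_div_iff_mul_lt' (cOf_dvd p b)]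
  exact (Nat.mul_le_mul_right _ hc).trans_lt hb

/-- The points of `(0, 1]` at which `δ_b(r, s, ·)` jumps, for `b` large: they are the counterparts
of the points `jumpPt`, which are ordered by `cle` instead of `≤`. -/
def deltaJump (p : ℤ × ℤ) (b : ℕ) (e : ℤ) (k : ℕ) : ℚ :=
  jumpFract (ratOf p) (cOf p b) e k + ⌊1 - ratOf p⌋ / b

lemma deltaJump_eq_div_cOf (hs : p.2 ≠ 0) (b : ℕ) (e : ℤ) (k : ℕ) :
    deltaJump p b e k =
      (upperFract (e * ratOf p) + ⌊1 - ratOf p⌋ / (b / cOf p b : ℕ) + k) / cOf p b := by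
  have hc : (cOf p b : ℚ) ≠ 0 := by exact_mod_cast (cOf_pos hs b).ne'
  rw [deltaJump, jumpFract, Nat.cast_div (cOf_dvd p b) hc]
  field_simp
  ring

lemma jumpPt_eq_jumpFract_sub (p : ℤ × ℤ) (b : ℕ) (a e : ℤ) (k : ℕ) :
    jumpPt p b a e k = (jumpFract (ratOf p) (cOf p b) e k : ℝ) - ⌊1 - a * ratOf p⌋ := by
  rw [jumpPt, cangle_eq_upperFract, upperFract_ratCast, jumpFract]
  push_cast
  rfl

lemma deltaJump_mem_Ioc (hs : p.2 ≠ 0) (hα : ¬ IsNonPosInt (ratOf p))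
    (hb : p.2.natAbs * (ratOf p).num.natAbs < b) (he : p.2 ∣ b * e - cOf p b) {k : ℕ}
    (hk : k < cOf p b) : deltaJump p b e k ∈ Set.Ioc 0 1 := by
  rw [deltaJump_eq_div_cOf hs]
  exact add_natCast_div_mem_Ioc (upperFract_add_floor_div_mem_Ioc hα (natAbs_num_lt_div_cOf hs hb)
    (den_ratOf_dvd_mul_sub_one hs he)) hk

lemma qdelta_eq_card_filter_deltaJump_le (hs : p.2 ≠ 0) (hα : ¬ IsNonPosInt (ratOf p))
    (hb : p.2.natAbs * (ratOf p).num.natAbs < b) (hV : inV p b) (he : p.2 ∣ b * e - cOf p b)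
    {x : ℝ} (hx : x ∈ Set.Icc (0 : ℝ) 1) :
    qdelta b p.1 p.2 x =
      ((Finset.range (cOf p b)).filter fun k => (deltaJump p b e k : ℝ) ≤ x).card := by
  have hnum := natAbs_num_lt_div_cOf hs hb
  have hden := den_ratOf_dvd_mul_sub_one hs he
  set ξ : ℚ := upperFract (e * ratOf p) + ⌊1 - ratOf p⌋ / (b / cOf p b : ℕ) with hξ
  have hξ01 : (ξ : ℝ) ∈ Set.Ioc (0 : ℝ) 1 :=
    ratCast_mem_Ioc (upperFract_add_floor_div_mem_Ioc hα hnum hden)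
  have hjump : ∀ k, (deltaJump p b e k : ℝ) = ((ξ : ℝ) + k) / cOf p b := fun k => by
    exact_mod_cast congrArg (Rat.cast (K := ℝ)) (deltaJump_eq_div_cOf hs b e k)
  have hqdelta : qdelta b p.1 p.2 x = ⌊(cOf p b : ℝ) * x - (dwork (b / cOf p b) (ratOf p) : ℚ)
      - (⌊1 - ratOf p⌋ : ℝ) / (b / cOf p b : ℕ)⌋ + 1 :=
    if_pos ((gcd_div_cOf_eq_one_iff hs).2 hV)
  simp only [hjump]
  rw [hqdelta, dwork_eq_upperFract hα hnum hden, card_filter_add_div_le (cOf_pos hs b) hξ01 hx,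
    sub_sub, hξ]
  push_cast
  rfl

lemma qdelta_eq_XiCount (hs : p.2 ≠ 0) (hα : ¬ IsNonPosInt (ratOf p))
    (hb : p.2.natAbs * (ratOf p).num.natAbs < b) (he : goodChoice p b e) {a : ℤ} {x y : ℝ}
    (hx : x ∈ Set.Icc (0 : ℝ) 1)
    (hxy : inV p b → ∀ k < cOf p b, ((deltaJump p b e k : ℝ) ≤ x ↔ cle (jumpPt p b a e k) y)) :
    qdelta b p.1 p.2 x = XiCount p b a e y := by
  rw [XiCount]
  split_ifs with hV
  · rw [qdelta_eq_card_filter_deltaJump_le hs hα hb hV (he hV).2 hx,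
      Finset.filter_congr fun k hk => hxy hV k (Finset.mem_range.1 hk)]
  · exact if_neg fun h => hV ((gcd_div_cOf_eq_one_iff hs).1 h)

lemma deltaJump_le_iff_cle_jumpPt {q : ℤ × ℤ} {f : ℤ} {d : ℕ} (hd : d ≠ 0)
    (hp : p.2 ≠ 0) (hq : q.2 ≠ 0) (hpd : p.2.natAbs ∣ d) (hqd : q.2.natAbs ∣ d)
    (hb : (d : ℤ) * (|⌊1 - ratOf p⌋| + |⌊1 - ratOf q⌋|) < b)
    (he : p.2 ∣ b * e - cOf p b) (hf : q.2 ∣ b * f - cOf q b) {a : ℤ} (ha : 0 < a)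
    {k l : ℕ} (hk : k < cOf p b) (hl : l < cOf q b) :
    deltaJump p b e k ≤ deltaJump q b f l ↔ cle (jumpPt p b a e k) (jumpPt q b a f l) := by
  have hmem : ∀ {p : ℤ × ℤ} {e : ℤ} {k : ℕ}, k < cOf p b →
      jumpFract (ratOf p) (cOf p b) e k ∈ Set.Ioc 0 1 :=
    fun hk => add_natCast_div_mem_Ioc (upperFract_mem_Ioc _) hk
  have hden : ∀ {p : ℤ × ℤ} {e : ℤ} {k : ℕ}, p.2 ≠ 0 → p.2.natAbs ∣ d →
      (jumpFract (ratOf p) (cOf p b) e k).den ∣ d := fun hp hpd =>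
    (den_jumpFract_dvd _ (cOf_pos hp b) _ _).trans ((den_ratOf_mul_cOf_dvd hp b).trans hpd)
  have hint : ∀ {p : ℤ × ℤ} {e : ℤ} {k : ℕ}, p.2 ≠ 0 → p.2 ∣ b * e - cOf p b →
      ∃ m : ℤ, b * jumpFract (ratOf p) (cOf p b) e k - ratOf p = m := fun {p e k} hp he => by
    have h := exists_mul_jumpFract_sub_eq_intCast (cOf_pos hp b).ne'
      (den_ratOf_dvd_mul_sub_one hp he) k
    rwa [Nat.div_mul_cancel (cOf_dvd p b)] at h
  rw [jumpPt_eq_jumpFract_sub, jumpPt_eq_jumpFract_sub]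
  exact add_floor_div_le_iff_cle hd (hmem hk) (hmem hl) (hden hp hpd) (hden hq hqd)
    (hint hp he) (hint hq hf) hb ha

end Pair

section Family

variable {ι : Type*} [Finite ι] {q : ι → ℤ × ℤ} {d b : ℕ} {e : ι → ℤ}

lemma qdelta_image_eq_XiCount_range (hd : d ≠ 0) (hs : ∀ i, (q i).2 ≠ 0)
    (hα : ∀ i, ¬ IsNonPosInt (ratOf (q i))) (hqd : ∀ i, (q i).2.natAbs ∣ d)
    (hb : ∀ i, 2 * d * ((ratOf (q i)).num.natAbs + 1) < b) (he : ∀ i, goodChoice (q i) b (e i))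
    {a : ℤ} (ha : 0 < a) :
    (fun (x : ℝ) i => qdelta b (q i).1 (q i).2 x) '' Set.Icc 0 1 =
      Set.range fun (y : ℝ) i => (XiCount (q i) b a (e i) y : ℤ) := by
  let P : (Σ i : {i // inV (q i) b}, Fin (cOf (q i) b)) → ℝ := fun t =>
    deltaJump (q t.1) b (e t.1) t.2
  let J : (Σ i : {i // inV (q i) b}, Fin (cOf (q i) b)) → ℝ := fun t =>
    jumpPt (q t.1) b a (e t.1) t.2
  have hnum : ∀ i, (q i).2.natAbs * (ratOf (q i)).num.natAbs < b := fun i =>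
    (Nat.mul_le_mul ((Nat.le_of_dvd (Nat.pos_of_ne_zero hd) (hqd i)).trans
      (Nat.le_mul_of_pos_left d two_pos)) (Nat.le_succ _)).trans_lt (hb i)
  have hPJ : ∀ s t, P s ≤ P t ↔ christolKey (J s) ≤ christolKey (J t) := fun s t => by
    rw [christolKey_le_iff, Rat.cast_le]
    exact deltaJump_le_iff_cle_jumpPt hd (hs _) (hs _) (hqd _) (hqd _)
      (mul_abs_floor_add_abs_floor_lt (hb _) (hb _)) (he _ s.1.2).2 (he _ t.1.2).2 ha s.2.2 t.2.2
  have hP : ∀ t, P t ∈ Set.Ioc (0 : ℝ) 1 := fun t =>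
    ratCast_mem_Ioc (deltaJump_mem_Ioc (hs _) (hα _) (hnum _) (he _ t.1.2).2 t.2.2)
  have heq : ∀ x ∈ Set.Icc (0 : ℝ) 1, ∀ y, (∀ t, P t ≤ x ↔ christolKey (J t) ≤ christolKey y) →
      ∀ i, qdelta b (q i).1 (q i).2 x = XiCount (q i) b a (e i) y := fun x hx y hxy i =>
    qdelta_eq_XiCount (hs i) (hα i) (hnum i) (he i) hx fun hV k hk =>
      (hxy ⟨⟨i, hV⟩, k, hk⟩).trans christolKey_le_iff
  ext g
  constructor
  · rintro ⟨x, hx, rfl⟩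
    obtain ⟨_, ⟨y, rfl⟩, hy⟩ := exists_forall_le_iff_le hPJ (fun t => Set.mem_range_self (J t))
      (exists_forall_not_christolKey_le J) x
    exact ⟨y, funext fun i => (heq x hx y hy i).symm⟩
  · rintro ⟨y, rfl⟩
    obtain ⟨x, hx, hxy⟩ := exists_forall_le_iff_le (fun s t => (hPJ s t).symm)
      (S := Set.Icc 0 1) (fun t => Set.Ioc_subset_Icc_self (hP t))
      ⟨0, Set.left_mem_Icc.2 zero_le_one, fun t => (hP t).1.not_ge⟩ (christolKey y)
    exact ⟨x, hx, funext (heq x hx y fun t => (hxy t).symm)⟩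

end Family

section RepMod

variable {p : ℤ × ℤ} {b b' : ℕ}

lemma cOf_congr (h : b ≡ b' [MOD p.2.natAbs]) : cOf p b = cOf p b' := by
  have hgcd := (h.of_dvd (Int.natAbs_dvd_natAbs.2 (Int.gcd_dvd_right p.1 p.2))).gcd_eq
  rwa [Int.natAbs_natCast, Nat.gcd_comm, Nat.gcd_comm b'] at hgcd

lemma inV_congr (h : b ≡ b' [MOD p.2.natAbs]) : inV p b ↔ inV p b' := by
  rw [inV, inV, cOf_congr h, Nat.gcd_comm, h.gcd_eq, Nat.gcd_comm]

lemma goodChoice_congr (h : b ≡ b' [MOD p.2.natAbs]) {e : ℤ} :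
    goodChoice p b e ↔ goodChoice p b' e := by
  have hdvd : p.2 ∣ (b' * e - cOf p b') - (b * e - cOf p b) := by
    rw [cOf_congr h, sub_sub_sub_cancel_right, ← sub_mul]
    exact (Int.natAbs_dvd.1 (Nat.modEq_iff_dvd.1 h)).mul_right e
  rw [goodChoice, goodChoice, inV_congr h, dvd_iff_dvd_of_dvd_sub hdvd]

lemma XiCount_congr (h : b ≡ b' [MOD p.2.natAbs]) (a e : ℤ) (x : ℝ) :
    XiCount p b a e x = XiCount p b' a e x := by
  simp only [XiCount, jumpPt, cOf_congr h]
  exact if_congr (inV_congr h) rfl rfl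

lemma repMod_modEq (d b : ℕ) : repMod d b ≡ b [MOD d] := by
  unfold repMod Nat.ModEq
  split_ifs with h
  · rw [Nat.mod_self, h]
  · exact Nat.mod_mod b d

lemma aOf_pos (d b : ℕ) : 0 < aOf d b := by
  unfold aOf
  split_ifs with h
  · exact h.choose_spec.1
  · exact one_pos

end RepMod

section LcmDenominators

variable {v w : ℕ} {rr : Fin v → ℤ × ℤ} {tt : Fin w → ℤ × ℤ}

lemma natAbs_snd_dvd_dRT (rr : Fin v → ℤ × ℤ) (tt : Fin w → ℤ × ℤ) (i : Fin v ⊕ Fin w) :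
    (Sum.elim rr tt i).2.natAbs ∣ dRT rr tt := by
  rcases i with i | j
  · exact (Finset.dvd_lcm (f := fun i => (rr i).2.natAbs) (Finset.mem_univ i)).trans
      (Nat.dvd_lcm_left _ _)
  · exact (Finset.dvd_lcm (f := fun j => (tt j).2.natAbs) (Finset.mem_univ j)).trans
      (Nat.dvd_lcm_right _ _)

lemma dRT_ne_zero (hs : ∀ i, (rr i).2 ≠ 0) (hu : ∀ j, (tt j).2 ≠ 0) : dRT rr tt ≠ 0 := by
  refine Nat.lcm_ne_zero ?_ ?_ <;> simp [Finset.lcm_eq_zero_iff, hs, hu]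

end LcmDenominators

end

/-- for `b` large enough, the image of `[0,1]` under `Δ_b^{𝐫,𝐭}` equals the
image of `ℝ` under `Ξ_{𝐫,𝐭}(b̲, ·)`, where `b̲ ∈ {1,…,d_{𝐫,𝐭}}` represents `b` modulo
`d_{𝐫,𝐭}`. -/
theorem delta_image_eq_xi_range {v w : ℕ} (rr : Fin v → ℤ × ℤ) (tt : Fin w → ℤ × ℤ)
    (hs : ∀ i, (rr i).2 ≠ 0) (hu : ∀ j, (tt j).2 ≠ 0)
    (hr : ∀ i, ¬ IsNonPosInt (ratOf (rr i))) (ht : ∀ j, ¬ IsNonPosInt (ratOf (tt j))) :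
    ∃ B : ℕ, 0 < B ∧ ∀ b : ℕ, B ≤ b →
      ∀ (e : Fin v → ℤ) (f : Fin w → ℤ),
        (∀ i, goodChoice (rr i) (repMod (dRT rr tt) b) (e i)) →
        (∀ j, goodChoice (tt j) (repMod (dRT rr tt) b) (f j)) →
          (fun x : ℝ => qDeltaFn b rr tt x) '' Set.Icc (0 : ℝ) 1 =
            Set.range (fun x : ℝ => Xi rr tt (repMod (dRT rr tt) b) e f x) := by
  set d := dRT rr tt
  let q := Sum.elim rr tt
  have hq : ∀ i, (q i).2 ≠ 0 := Sum.rec hs hu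
  have hα : ∀ i, ¬ IsNonPosInt (ratOf (q i)) := Sum.rec hr ht
  have hd : ∀ i, (q i).2.natAbs ∣ d := natAbs_snd_dvd_dRT rr tt
  have hlarge : ∀ᶠ b : ℕ in Filter.atTop, ∀ i, 2 * d * ((ratOf (q i)).num.natAbs + 1) < b :=
    Filter.eventually_all.2 fun i => Filter.eventually_gt_atTop _
  obtain ⟨B, hB⟩ := Filter.eventually_atTop.1 hlarge
  refine ⟨B + 1, B.succ_pos, fun b hb e f he hf => ?_⟩
  have hmod : ∀ i, repMod d b ≡ b [MOD (q i).2.natAbs] := fun i => (repMod_modEq d b).of_dvd (hd i)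
  have hgood : ∀ i, goodChoice (q i) b (Sum.elim e f i) := fun i =>
    (goodChoice_congr (hmod i)).1 (Sum.rec he hf i)
  have himage := qdelta_image_eq_XiCount_range (dRT_ne_zero hs hu) hq hα hd
    (hB b (Nat.le_of_succ_le hb)) hgood (Int.natCast_pos.2 (aOf_pos d (repMod d b)))
  simp only [← XiCount_congr (hmod _)] at himage
  have hsum := congrArg (Set.image fun g : Fin v ⊕ Fin w → ℤ =>
    (∑ i, g (.inl i)) - ∑ j, g (.inr j)) himage
  rwa [Set.image_image, ← Set.range_comp] at hsum
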